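/- Let A be a complex Banach algebra, φ a character on A, and u ∈ A an element with φ(u) = 1 and a·u = φ(a)·u for all a ∈ A. Let E be a Banach A-bimodule in the class M_φ and D : A → E a bounded derivation. Then the element t := D(u) implements D explicitly: D(a) = φ(a)·t − a • t for all a ∈ A; in particular D is inner. (Explicit form of the sufficiency direction in the proof of Theorem 3.1) -/

import Mathlib

open NormedSpace

universe u v w

/- `A` is a complex Banach algebra (not necessarily unital). -/
variable {A : Type u} [NonUnitalNormedRing A] [NormedSpace ℂ A]
  [IsScalarTower ℂ A A] [SMulCommClass ℂ A A] [CompleteSpace A]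

/-- **Explicit sufficiency direction in the proof of Theorem 3.1.** If `u ∈ A`
satisfies `φ u = 1` and `a * u = φ a • u` for all `a`, then for every Banach space `E`
with a bounded left `A`-module action `s` (right action `x · a := φ a • x`, so
`E ∈ M_φ`) and every bounded derivation `D : A → E`, the element `t := D u`
implements `D` explicitly: `D a = φ a • t - a • t`; in particular `D` is inner. -/
theorem derivation_explicitly_inner_of_u
    (φ : A →L[ℂ] ℂ) (hφmul : ∀ a b : A, φ (a * b) = φ a * φ b) (hφne : φ ≠ 0)
    (u : A) (hu1 : φ u = 1) (hu2 : ∀ a : A, a * u = φ a • u)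
    (E : Type v) [NormedAddCommGroup E] [NormedSpace ℂ E] [CompleteSpace E]
    (s : A →ₗ[ℂ] E →ₗ[ℂ] E)
    (hs : ∀ (a b : A) (x : E), s (a * b) x = s a (s b x))
    (hbound : ∀ (a : A) (x : E), ‖s a x‖ ≤ ‖a‖ * ‖x‖)
    (D : A →L[ℂ] E)
    (hD : ∀ a b : A, D (a * b) = φ b • D a + s a (D b)) :
    (∀ a : A, D a = φ a • D u - s a (D u)) ∧
      ∃ x : E, ∀ a : A, D a = s a x - φ a • x := by
  have key : ∀ a : A, D a = φ a • D u - s a (D u) := fun a => by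
    have h := hD a u
    rw [hu2, map_smul, hu1, one_smul] at h
    exact eq_sub_of_add_eq h.symm
  refine ⟨key, -D u, fun a => ?_⟩
  rw [key a, map_neg, smul_neg]
  abel
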